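/- arXiv:2601.17347 — 2 statements merged into one kernel-verified Lean document; each statement's English description precedes it below -/
import Mathlib

section
/- Let 0<α<1 and let f be a Schwartz function on ℝ. Then the forward-shift Marchaud operator f ↦ C_α ∫₀^∞ [f(ξ) − f(ξ+y)] / y^{1+α} dy, with C_α = −1/Γ(−α), has Fourier symbol (−ik)^α; that is, its Fourier transform at k equals (−ik)^α f̂(k), with the principal branch. -/
/-!
Put `s = -ik`. Since translating `f` by `y` multiplies `FT f k` by `e^{-sy}`, Fubini's theorem
turns the Fourier transform of the Marchaud operator into `FT f k` times the constant
`∫₀^∞ (1 - e^{-sy}) y^{-1-α} dy`. Absolute convergence is a smoothness condition on the `L¹` modulus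
of continuity `ω` of `f`, namely `∫₀^∞ ω(y) y^{-1-α} dy < ∞`; it holds as soon as `f` and `f'` are
integrable, because then `ω(y) = O(min 1 y)`.

For `Re s > 0`, integrating by parts reduces the constant to the Gamma integral
`∫₀^∞ y^{-α} e^{-sy} dy = s^{α-1} Γ(1 - α)`, which is known for real `s` and extends to complex `s`
by the identity theorem. Both sides of the resulting formula are continuous on the closed half-plane
`Re s ≥ 0`, so it persists at `s = -ik`.
-/

open MeasureTheory

noncomputable section

/-- Fourier transform with convention `f̂(k) = ∫ f(ξ) e^{-ikξ} dξ`. -/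
def FT (f : ℝ → ℂ) (k : ℝ) : ℂ :=
  ∫ ξ : ℝ, f ξ * Complex.exp (-(Complex.I * (k : ℂ) * (ξ : ℂ)))

/-- The forward-shift Marchaud operator `C_α ∫₀^∞ (f(ξ) − f(ξ+y)) y^{−1−α} dy` with
`C_α = −1/Γ(−α)`. -/
def marchaudForward (α : ℝ) (f : ℝ → ℂ) (ξ : ℝ) : ℂ :=
  ((-1 / Real.Gamma (-α) : ℝ) : ℂ) *
    ∫ y in Set.Ioi (0 : ℝ), (f ξ - f (ξ + y)) / ((y ^ (1 + α) : ℝ) : ℂ)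

open Set Filter Topology

/-! ### The Gamma integral with complex rate -/

section GammaIntegral

variable {a s : ℂ}

lemma norm_cpow_mul_exp_neg_mul (a s : ℂ) {y : ℝ} (hy : 0 < y) :
    ‖(y : ℂ) ^ a * Complex.exp (-(s * y))‖ = y ^ a.re * Real.exp (-s.re * y) := by
  simp [Complex.norm_cpow_eq_rpow_re_of_pos hy, Complex.norm_exp]

lemma integrableOn_cpow_mul_exp_neg_mul_Ioi (ha : -1 < a.re) (hs : 0 < s.re) :
    IntegrableOn (fun y : ℝ => (y : ℂ) ^ a * Complex.exp (-(s * y))) (Ioi 0) := by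
  have hreal : IntegrableOn (fun y : ℝ => y ^ a.re * Real.exp (-s.re * y)) (Ioi 0) := by
    simpa only [Real.rpow_one] using integrableOn_rpow_mul_exp_neg_mul_rpow ha one_pos hs
  refine hreal.mono' (by fun_prop) ?_
  filter_upwards [ae_restrict_mem measurableSet_Ioi] with y hy
  exact (norm_cpow_mul_exp_neg_mul a s hy).le

lemma differentiableAt_integral_cpow_mul_exp_neg_mul (ha : -1 < a.re) (hs : 0 < s.re) :
    DifferentiableAt ℂ
      (fun w : ℂ => ∫ y in Ioi (0 : ℝ), (y : ℂ) ^ a * Complex.exp (-(w * y))) s := by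
  have hbound :
      IntegrableOn (fun y : ℝ => y ^ (a.re + 1) * Real.exp (-(s.re / 2) * y)) (Ioi 0) := by
    simpa only [Real.rpow_one] using
      integrableOn_rpow_mul_exp_neg_mul_rpow (by linarith) one_pos (half_pos hs)
  refine (hasDerivAt_integral_of_dominated_loc_of_deriv_le (μ := volume.restrict (Ioi 0))
    (s := {w : ℂ | s.re / 2 < w.re})
    (F := fun w (y : ℝ) => y ^ a * Complex.exp (-(w * y)))
    (F' := fun w (y : ℝ) => -(y ^ (a + 1) * Complex.exp (-(w * y))))
    ((isOpen_lt continuous_const Complex.continuous_re).mem_nhds (half_lt_self hs))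
    (.of_forall fun w => by fun_prop) (integrableOn_cpow_mul_exp_neg_mul_Ioi ha hs)
    (by fun_prop) ?_ hbound ?_).2.differentiableAt
  · filter_upwards [ae_restrict_mem measurableSet_Ioi] with y (hy : 0 < y) w (hw : s.re / 2 < w.re)
    rw [norm_neg, norm_cpow_mul_exp_neg_mul _ _ hy, Complex.add_re, Complex.one_re]
    gcongr
  · filter_upwards [ae_restrict_mem measurableSet_Ioi] with y (hy : 0 < y) w _
    have hexp : HasDerivAt (fun w : ℂ => Complex.exp (-(w * y)))
        (Complex.exp (-(w * y)) * -(1 * y)) w :=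
      ((hasDerivAt_id w).mul_const (y : ℂ)).fun_neg.cexp
    refine (hexp.const_mul _).congr_deriv ?_
    rw [Complex.cpow_add _ _ (Complex.ofReal_ne_zero.2 hy.ne'), Complex.cpow_one]
    ring

lemma integral_cpow_mul_exp_neg_mul_Ioi_of_re_pos (ha : 0 < a.re) (hs : 0 < s.re) :
    ∫ y in Ioi (0 : ℝ), (y : ℂ) ^ (a - 1) * Complex.exp (-(s * y)) =
      s ^ (-a) * Complex.Gamma a := by
  have hopen : IsOpen {w : ℂ | 0 < w.re} := isOpen_lt continuous_const Complex.continuous_re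
  have hleft : AnalyticOnNhd ℂ
      (fun w : ℂ => ∫ y in Ioi (0 : ℝ), (y : ℂ) ^ (a - 1) * Complex.exp (-(w * y)))
      {w | 0 < w.re} :=
    DifferentiableOn.analyticOnNhd (fun w hw =>
      (differentiableAt_integral_cpow_mul_exp_neg_mul (by simpa using ha)
        hw).differentiableWithinAt) hopen
  have hright : AnalyticOnNhd ℂ (fun w : ℂ => w ^ (-a) * Complex.Gamma a) {w | 0 < w.re} :=
    DifferentiableOn.analyticOnNhd (fun w hw => ((differentiableAt_id.cpow_const
      (Or.inl hw)).mul_const _).differentiableWithinAt) hopen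
  have hreal : ∀ r : ℝ, 0 < r →
      ∫ y in Ioi (0 : ℝ), (y : ℂ) ^ (a - 1) * Complex.exp (-(r * y)) =
        (r : ℂ) ^ (-a) * Complex.Gamma a := fun r hr => by
    rw [Complex.integral_cpow_mul_exp_neg_mul_Ioi ha hr, one_div, Complex.cpow_neg,
      Complex.inv_cpow _ _ (by simp [Complex.arg_ofReal_of_nonneg hr.le, Real.pi_ne_zero.symm])]
  have hcoe : Tendsto ((↑) : ℝ → ℂ) (𝓝[≠] 1) (𝓝[≠] ((1 : ℝ) : ℂ)) :=
    Complex.continuous_ofReal.continuousWithinAt.tendsto_nhdsWithin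
      fun r hr => Complex.ofReal_injective.ne hr
  refine hleft.eqOn_of_preconnected_of_frequently_eq hright
    (convex_halfSpace_re_gt 0).isPreconnected (by simp) (hcoe.frequently ?_) hs
  exact (eventually_nhdsWithin_of_eventually_nhds
    ((lt_mem_nhds one_pos).mono hreal)).frequently

end GammaIntegral

/-! ### The symbol integral -/

section SymbolIntegral

variable {α : ℝ} {s : ℂ}

lemma div_rpow_one_add (α : ℝ) {y : ℝ} (hy : 0 < y) : y / y ^ (1 + α) = y ^ (-α) := by
  rw [Real.rpow_add hy, Real.rpow_one, Real.rpow_neg hy.le, div_mul_cancel_left₀ hy.ne']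

lemma integrableOn_min_one_div_rpow_Ioi (hα0 : 0 < α) (hα1 : α < 1) :
    IntegrableOn (fun y : ℝ => min 1 y / y ^ (1 + α)) (Ioi 0) := by
  rw [← Ioc_union_Ioi_eq_Ioi zero_le_one]
  refine IntegrableOn.union ?_ ?_
  · have hpow : IntegrableOn (fun y : ℝ => y ^ (-α)) (Ioc 0 1) :=
      (intervalIntegral.intervalIntegrable_rpow' (by linarith)).1
    refine hpow.congr_fun (fun y hy => ?_) measurableSet_Ioc
    rw [min_eq_right hy.2, div_rpow_one_add α hy.1]
  · have hpow : IntegrableOn (fun y : ℝ => y ^ (-(1 + α))) (Ioi 1) :=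
      integrableOn_Ioi_rpow_of_lt (by linarith) one_pos
    refine hpow.congr_fun (fun y (hy : 1 < y) => ?_) measurableSet_Ioi
    simp only [min_eq_left hy.le, one_div, Real.rpow_neg (zero_le_one.trans hy.le)]

lemma norm_one_sub_exp_neg_le {z : ℂ} (hz : 0 ≤ z.re) :
    ‖1 - Complex.exp (-z)‖ ≤ 2 * min 1 ‖z‖ := by
  rcases le_total 1 ‖z‖ with h | h
  · have hexp : ‖Complex.exp (-z)‖ ≤ 1 := by simpa [Complex.norm_exp] using hz
    calc ‖1 - Complex.exp (-z)‖ ≤ ‖(1 : ℂ)‖ + ‖Complex.exp (-z)‖ := norm_sub_le _ _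
      _ ≤ 2 * min 1 ‖z‖ := by rw [min_eq_left h, norm_one]; linarith
  · rw [min_eq_right h, norm_sub_rev, ← norm_neg z]
    exact Complex.norm_exp_sub_one_le (by rwa [norm_neg])

lemma norm_one_sub_exp_neg_mul_le (hs : 0 ≤ s.re) {y : ℝ} (hy : 0 ≤ y) :
    ‖1 - Complex.exp (-(s * y))‖ ≤ 2 * max 1 ‖s‖ * min 1 y := by
  have hre : 0 ≤ (s * y).re := by simpa using mul_nonneg hs hy
  calc ‖1 - Complex.exp (-(s * y))‖ ≤ 2 * min 1 (‖s‖ * y) := by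
        simpa [abs_of_nonneg hy] using norm_one_sub_exp_neg_le hre
    _ ≤ 2 * min (max 1 ‖s‖ * 1) (max 1 ‖s‖ * y) := by gcongr <;> simp
    _ = 2 * max 1 ‖s‖ * min 1 y := by rw [← mul_min_of_nonneg _ _ (by positivity), mul_assoc]

/-- The integral `∫₀^∞ (1 - e^{-sy}) y^{-1-α} dy`, which converges for `0 < α < 1` and `Re s ≥ 0`.
At `s = -ik` it is the Fourier symbol of the unnormalized Marchaud operator. -/
def symbolIntegral (α : ℝ) (s : ℂ) : ℂ :=
  ∫ y in Ioi (0 : ℝ), (1 - Complex.exp (-(s * y))) / ((y ^ (1 + α) : ℝ) : ℂ)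

lemma norm_one_sub_exp_neg_mul_div_rpow_le (α : ℝ) (hs : 0 ≤ s.re) {y : ℝ} (hy : 0 ≤ y) :
    ‖(1 - Complex.exp (-(s * y))) / ((y ^ (1 + α) : ℝ) : ℂ)‖ ≤
      2 * max 1 ‖s‖ * (min 1 y / y ^ (1 + α)) := by
  have hpow : 0 ≤ y ^ (1 + α) := Real.rpow_nonneg hy _
  rw [norm_div, Complex.norm_real, Real.norm_of_nonneg hpow, ← mul_div_assoc]
  gcongr
  exact norm_one_sub_exp_neg_mul_le hs hy

lemma integrableOn_one_sub_exp_neg_mul_div_rpow (hα0 : 0 < α) (hα1 : α < 1) (hs : 0 ≤ s.re) :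
    IntegrableOn (fun y : ℝ => (1 - Complex.exp (-(s * y))) / ((y ^ (1 + α) : ℝ) : ℂ)) (Ioi 0) := by
  refine ((integrableOn_min_one_div_rpow_Ioi hα0 hα1).const_mul (2 * max 1 ‖s‖)).mono'
    (Measurable.aestronglyMeasurable (by fun_prop)) ?_
  filter_upwards [ae_restrict_mem measurableSet_Ioi] with y (hy : 0 < y)
  exact norm_one_sub_exp_neg_mul_div_rpow_le α hs hy.le

lemma continuousOn_symbolIntegral (hα0 : 0 < α) (hα1 : α < 1) :
    ContinuousOn (symbolIntegral α) {s : ℂ | 0 ≤ s.re} := by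
  intro s _
  have hnorm : ∀ᶠ w in 𝓝[{w : ℂ | 0 ≤ w.re}] s, ‖w‖ < ‖s‖ + 1 :=
    continuous_norm.continuousWithinAt.eventually_lt_const (lt_add_one _)
  refine continuousWithinAt_of_dominated
    (.of_forall fun w => Measurable.aestronglyMeasurable (by fun_prop)) ?_
    ((integrableOn_min_one_div_rpow_Ioi hα0 hα1).const_mul (2 * max 1 (‖s‖ + 1)))
    (.of_forall fun y => Continuous.continuousWithinAt (by fun_prop))
  filter_upwards [hnorm, self_mem_nhdsWithin] with w hw hre
  filter_upwards [ae_restrict_mem measurableSet_Ioi] with y (hy : 0 < y)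
  refine (norm_one_sub_exp_neg_mul_div_rpow_le α hre hy.le).trans ?_
  gcongr

lemma tendsto_min_one_mul_rpow_neg_nhdsGT_zero (hα1 : α < 1) :
    Tendsto (fun y : ℝ => min 1 y * y ^ (-α)) (𝓝[>] 0) (𝓝 0) := by
  have hpow : Tendsto (fun y : ℝ => y ^ (1 - α)) (𝓝[>] 0) (𝓝 0) := by
    have h := (Real.continuousAt_rpow_const 0 (1 - α) (Or.inr (by linarith))).tendsto
    rw [Real.zero_rpow (by linarith)] at h
    exact h.mono_left nhdsWithin_le_nhds
  refine hpow.congr' ?_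
  filter_upwards [Ioo_mem_nhdsGT one_pos] with y hy
  rw [min_eq_right hy.2.le, sub_eq_add_neg, Real.rpow_add hy.1, Real.rpow_one]

lemma tendsto_min_one_mul_rpow_neg_atTop (hα0 : 0 < α) :
    Tendsto (fun y : ℝ => min 1 y * y ^ (-α)) atTop (𝓝 0) := by
  refine (tendsto_rpow_neg_atTop hα0).congr' ?_
  filter_upwards [eventually_ge_atTop 1] with y hy
  rw [min_eq_left hy, one_mul]

lemma tendsto_one_sub_exp_neg_mul_mul_cpow_neg {l : Filter ℝ} (hs : 0 ≤ s.re)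
    (hpos : ∀ᶠ y in l, 0 < y) (hl : Tendsto (fun y : ℝ => min 1 y * y ^ (-α)) l (𝓝 0)) :
    Tendsto (fun y : ℝ => (1 - Complex.exp (-(s * y))) * (y : ℂ) ^ (-α : ℂ)) l (𝓝 0) := by
  refine squeeze_zero_norm' ?_ (by simpa using hl.const_mul (2 * max 1 ‖s‖))
  filter_upwards [hpos] with y hy
  rw [norm_mul, Complex.norm_cpow_eq_rpow_re_of_pos hy, Complex.neg_re, Complex.ofReal_re,
    ← mul_assoc]
  gcongr
  exact norm_one_sub_exp_neg_mul_le hs hy.le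

lemma mul_symbolIntegral_eq (hα0 : 0 < α) (hα1 : α < 1) (hs : 0 < s.re) :
    α * symbolIntegral α s =
      s * ∫ y in Ioi (0 : ℝ), (y : ℂ) ^ (-α : ℂ) * Complex.exp (-(s * y)) := by
  have hu : ∀ y ∈ Ioi (0 : ℝ), HasDerivAt (fun y : ℝ => 1 - Complex.exp (-(s * y)))
      (s * Complex.exp (-(s * y))) y := fun y _ =>
    (((Complex.ofRealCLM.hasDerivAt (x := y)).const_mul s).fun_neg.cexp.const_sub 1).congr_deriv
      (by simp [mul_comm])
  have hv : ∀ y ∈ Ioi (0 : ℝ), HasDerivAt (fun y : ℝ => (y : ℂ) ^ (-α : ℂ))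
      (-α * (y : ℂ) ^ (-α - 1 : ℂ)) y := fun y hy =>
    hasDerivAt_ofReal_cpow_const (ne_of_gt hy) (by simpa using hα0.ne')
  have huv' : ∀ y ∈ Ioi (0 : ℝ),
      -α * ((1 - Complex.exp (-(s * y))) / ((y ^ (1 + α) : ℝ) : ℂ)) =
        (1 - Complex.exp (-(s * y))) * (-α * (y : ℂ) ^ (-α - 1 : ℂ)) := fun y (hy : 0 < y) => by
    rw [Complex.ofReal_cpow hy.le, show (-α - 1 : ℂ) = -((1 + α : ℝ) : ℂ) by push_cast; ring,
      Complex.cpow_neg]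
    ring
  have hu'v : ∀ y ∈ Ioi (0 : ℝ), s * ((y : ℂ) ^ (-α : ℂ) * Complex.exp (-(s * y))) =
      s * Complex.exp (-(s * y)) * (y : ℂ) ^ (-α : ℂ) := fun y _ => by ring
  have huv'_int := IntegrableOn.congr_fun
    ((integrableOn_one_sub_exp_neg_mul_div_rpow hα0 hα1 hs.le).const_mul (-α : ℂ))
    huv' measurableSet_Ioi
  have hu'v_int := IntegrableOn.congr_fun
    ((integrableOn_cpow_mul_exp_neg_mul_Ioi (a := -α) (by simpa using hα1) hs).const_mul s)
    hu'v measurableSet_Ioi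
  have hparts := integral_Ioi_mul_deriv_eq_deriv_mul hu hv
    huv'_int hu'v_int
    (tendsto_one_sub_exp_neg_mul_mul_cpow_neg hs.le self_mem_nhdsWithin
      (tendsto_min_one_mul_rpow_neg_nhdsGT_zero hα1))
    (tendsto_one_sub_exp_neg_mul_mul_cpow_neg hs.le (eventually_gt_atTop 0)
      (tendsto_min_one_mul_rpow_neg_atTop hα0))
  rw [← setIntegral_congr_fun measurableSet_Ioi huv',
    ← setIntegral_congr_fun measurableSet_Ioi hu'v, integral_const_mul, integral_const_mul,
    sub_self, zero_sub, neg_mul, neg_inj] at hparts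
  exact hparts

lemma symbolIntegral_eq_of_re_pos (hα0 : 0 < α) (hα1 : α < 1) (hs : 0 < s.re) :
    symbolIntegral α s = s ^ (α : ℂ) * -Complex.Gamma (-α) := by
  have hα : (α : ℂ) ≠ 0 := Complex.ofReal_ne_zero.2 hα0.ne'
  have hs0 : s ≠ 0 := by rintro rfl; simp at hs
  have hgamma := integral_cpow_mul_exp_neg_mul_Ioi_of_re_pos (a := -α + 1)
    (by simpa using hα1) hs
  rw [add_sub_cancel_right, Complex.Gamma_add_one _ (neg_ne_zero.2 hα)] at hgamma
  refine mul_left_cancel₀ hα ?_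
  rw [mul_symbolIntegral_eq hα0 hα1 hs, hgamma, neg_add, neg_neg, Complex.cpow_add _ _ hs0,
    Complex.cpow_neg_one]
  field_simp

lemma symbolIntegral_eq (hα0 : 0 < α) (hα1 : α < 1) (hs : 0 ≤ s.re) :
    symbolIntegral α s = s ^ (α : ℂ) * -Complex.Gamma (-α) := by
  have hcont : ContinuousOn (fun s : ℂ => s ^ (α : ℂ) * -Complex.Gamma (-α)) {s | 0 ≤ s.re} :=
    fun s hs => ((Complex.continuousAt_cpow_const_of_re_pos (Or.inl hs)
      (by simpa using hα0)).mul_const _).continuousWithinAt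
  exact EqOn.of_subset_closure (s := {s : ℂ | 0 < s.re})
    (fun s hs => symbolIntegral_eq_of_re_pos hα0 hα1 hs)
    (continuousOn_symbolIntegral hα0 hα1) hcont (fun s (hs : 0 < s.re) => hs.le)
    (Complex.closure_setOfPred_lt_re 0).ge hs

end SymbolIntegral

/-! ### The integral modulus of continuity -/

section IntegralModulus

variable {E : Type*} [NormedAddCommGroup E] {f : ℝ → E} {y : ℝ}

/-- The `L¹` modulus of continuity `‖f - f(· + y)‖₁` of `f` at the single shift `y`, with no
supremum over smaller shifts. -/
def integralModulus (f : ℝ → E) (y : ℝ) : ℝ :=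
  ∫ ξ : ℝ, ‖f ξ - f (ξ + y)‖

lemma integralModulus_nonneg (f : ℝ → E) (y : ℝ) : 0 ≤ integralModulus f y :=
  integral_nonneg fun _ => norm_nonneg _

lemma aestronglyMeasurable_sub_shift (hf : AEStronglyMeasurable f) (μ : Measure ℝ) [SFinite μ] :
    AEStronglyMeasurable (fun p : ℝ × ℝ => f p.2 - f (p.2 + p.1)) (μ.prod volume) :=
  hf.comp_snd.sub
    (hf.comp_snd.comp_measurePreserving (measurePreserving_prod_add_right μ volume))

lemma integralModulus_le_two_mul_integral_norm (hf : Integrable f) (y : ℝ) :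
    integralModulus f y ≤ 2 * ∫ ξ : ℝ, ‖f ξ‖ := by
  have hshift : Integrable fun ξ : ℝ => f (ξ + y) := hf.comp_add_right y
  calc integralModulus f y ≤ ∫ ξ : ℝ, (‖f ξ‖ + ‖f (ξ + y)‖) :=
        integral_mono (hf.sub hshift).norm (hf.norm.add hshift.norm) fun ξ => norm_sub_le _ _
    _ = 2 * ∫ ξ : ℝ, ‖f ξ‖ := by
        rw [integral_add hf.norm hshift.norm, integral_add_right_eq_self (fun ξ => ‖f ξ‖) y,
          two_mul]

lemma integralModulus_le_mul_integral_norm_deriv [NormedSpace ℝ E] (hf : Differentiable ℝ f)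
    (hf' : Integrable (deriv f)) (hy : 0 ≤ y) :
    integralModulus f y ≤ y * ∫ ξ : ℝ, ‖deriv f ξ‖ := by
  have hpoint : ∀ ξ, ‖f ξ - f (ξ + y)‖ ≤ ∫ t in Ioc 0 y, ‖deriv f (ξ + t)‖ := fun ξ => by
    rw [norm_sub_rev, ← intervalIntegral.integral_of_le hy,
      intervalIntegral.integral_comp_add_left (fun t => ‖deriv f t‖), add_zero]
    exact norm_sub_le_integral_of_norm_deriv_le_of_le (by linarith) hf.continuous.continuousOn
      hf.differentiableOn (.of_forall fun _ _ => le_rfl) hf'.norm.intervalIntegrable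
  have hprod : Integrable (Function.uncurry fun t ξ : ℝ => ‖deriv f (ξ + t)‖)
      ((volume.restrict (Ioc 0 y)).prod volume) :=
    (measurePreserving_prod_add_right _ _).integrable_comp_of_integrable
      (hf'.norm.comp_snd (volume.restrict (Ioc 0 y)))
  calc integralModulus f y ≤ ∫ ξ : ℝ, ∫ t in Ioc 0 y, ‖deriv f (ξ + t)‖ :=
        integral_mono_of_nonneg (.of_forall fun _ => norm_nonneg _) hprod.integral_prod_right
          (.of_forall hpoint)
    _ = ∫ t in Ioc 0 y, ∫ ξ : ℝ, ‖deriv f (ξ + t)‖ := (integral_integral_swap hprod).symm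
    _ = y * ∫ ξ : ℝ, ‖deriv f ξ‖ := by
        simp_rw [integral_add_right_eq_self (fun ξ => ‖deriv f ξ‖)]
        simp [hy]

lemma integrableOn_integralModulus_div_rpow [NormedSpace ℝ E] {α : ℝ} (hα0 : 0 < α) (hα1 : α < 1)
    (hf : Integrable f) (hdiff : Differentiable ℝ f) (hf' : Integrable (deriv f)) :
    IntegrableOn (fun y => integralModulus f y / y ^ (1 + α)) (Ioi 0) := by
  set C := max (2 * ∫ ξ : ℝ, ‖f ξ‖) (∫ ξ : ℝ, ‖deriv f ξ‖)
  have hmeas : AEStronglyMeasurable (integralModulus f) (volume.restrict (Ioi 0)) :=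
    (aestronglyMeasurable_sub_shift hf.aestronglyMeasurable _).norm.integral_prod_right'
  refine ((integrableOn_min_one_div_rpow_Ioi hα0 hα1).const_mul C).mono'
    (hmeas.div₀ (by fun_prop)) ?_
  filter_upwards [ae_restrict_mem measurableSet_Ioi] with y (hy : 0 < y)
  rw [Real.norm_of_nonneg (by have := integralModulus_nonneg f y; positivity), ← mul_div_assoc,
    mul_min_of_nonneg _ _ (le_max_of_le_right (by positivity)), mul_one, mul_comm C y]
  gcongr
  refine le_min ?_ ?_
  · exact (integralModulus_le_two_mul_integral_norm hf y).trans (le_max_left _ _)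
  · refine (integralModulus_le_mul_integral_norm_deriv hdiff hf' hy.le).trans ?_
    gcongr
    exact le_max_right _ _

end IntegralModulus

/-! ### The Fourier transform of the Marchaud operator -/

section FourierTransform

variable {f : ℝ → ℂ}

lemma integrable_mul_fourierKernel_comp {X : Type*} [MeasurableSpace X] {μ : Measure X} {g : X → ℂ}
    {φ : X → ℝ} (hg : Integrable g μ) (hφ : Measurable φ) (k : ℝ) :
    Integrable (fun x => g x * Complex.exp (-(Complex.I * (k : ℂ) * (φ x : ℂ)))) μ :=
  hg.mul_bdd (c := 1) (by fun_prop) (.of_forall fun x => by simp [Complex.norm_exp])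

lemma FT_comp_add_right (f : ℝ → ℂ) (k y : ℝ) :
    FT (fun ξ => f (ξ + y)) k = Complex.exp (-(-(Complex.I * (k : ℂ)) * y)) * FT f k := by
  unfold FT
  rw [← integral_add_right_eq_self
    (fun ξ : ℝ => f ξ * Complex.exp (-(Complex.I * (k : ℂ) * (ξ : ℂ)))) y, ← integral_const_mul]
  congr 1 with ξ
  rw [mul_left_comm, ← Complex.exp_add]
  push_cast
  ring_nf

lemma FT_sub_shift_div (hf : Integrable f) (k y : ℝ) (c : ℂ) :
    FT (fun ξ => (f ξ - f (ξ + y)) / c) k =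
      (1 - Complex.exp (-(-(Complex.I * (k : ℂ)) * y))) / c * FT f k := by
  calc FT (fun ξ => (f ξ - f (ξ + y)) / c) k = (FT f k - FT (fun ξ => f (ξ + y)) k) / c := by
        unfold FT
        rw [← integral_sub (integrable_mul_fourierKernel_comp hf measurable_id' k)
          (integrable_mul_fourierKernel_comp (hf.comp_add_right y) measurable_id' k),
          ← integral_div]
        congr 1 with ξ
        ring
    _ = _ := by
        rw [FT_comp_add_right]
        ring

lemma integrable_sub_shift_div_rpow {α : ℝ} (hf : Integrable f)
    (hmod : IntegrableOn (fun y => integralModulus f y / y ^ (1 + α)) (Ioi 0)) :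
    Integrable (fun p : ℝ × ℝ => (f p.2 - f (p.2 + p.1)) / ((p.1 ^ (1 + α) : ℝ) : ℂ))
      ((volume.restrict (Ioi 0)).prod volume) := by
  have hmeas : AEStronglyMeasurable
      (fun p : ℝ × ℝ => (f p.2 - f (p.2 + p.1)) / ((p.1 ^ (1 + α) : ℝ) : ℂ))
      ((volume.restrict (Ioi 0)).prod volume) :=
    (aestronglyMeasurable_sub_shift hf.aestronglyMeasurable _).div₀
      (Measurable.aestronglyMeasurable (by fun_prop))
  have hfiber (y : ℝ) :
      Integrable (fun ξ => (f ξ - f (ξ + y)) / ((y ^ (1 + α) : ℝ) : ℂ)) :=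
    (hf.sub (hf.comp_add_right y)).div_const _
  refine (integrable_prod_iff hmeas).2 ⟨.of_forall hfiber, Integrable.congr hmod ?_⟩
  filter_upwards [ae_restrict_mem measurableSet_Ioi] with y (hy : 0 < y)
  simp only [norm_div, Complex.norm_real, Real.norm_of_nonneg (Real.rpow_nonneg hy.le _),
    integral_div, integralModulus]

lemma FT_marchaudForward {α : ℝ} (hf : Integrable f)
    (hmod : IntegrableOn (fun y => integralModulus f y / y ^ (1 + α)) (Ioi 0)) (k : ℝ) :
    FT (marchaudForward α f) k = ((-1 / Real.Gamma (-α) : ℝ) : ℂ) *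
      (symbolIntegral α (-(Complex.I * (k : ℂ))) * FT f k) := by
  have hprod := integrable_mul_fourierKernel_comp (integrable_sub_shift_div_rpow hf hmod)
    measurable_snd k
  calc FT (marchaudForward α f) k
      = ((-1 / Real.Gamma (-α) : ℝ) : ℂ) * ∫ ξ : ℝ, ∫ y in Ioi (0 : ℝ),
          (f ξ - f (ξ + y)) / ((y ^ (1 + α) : ℝ) : ℂ) *
            Complex.exp (-(Complex.I * (k : ℂ) * (ξ : ℂ))) := by
        simp_rw [FT, marchaudForward, mul_assoc, integral_const_mul, integral_mul_const]
    _ = ((-1 / Real.Gamma (-α) : ℝ) : ℂ) * ∫ y in Ioi (0 : ℝ),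
          FT (fun ξ => (f ξ - f (ξ + y)) / ((y ^ (1 + α) : ℝ) : ℂ)) k := by
        rw [← integral_integral_swap hprod]
        rfl
    _ = _ := by
        simp_rw [FT_sub_shift_div hf, integral_mul_const]
        rfl

end FourierTransform

theorem stmt3_general (α : ℝ) (hα0 : 0 < α) (hα1 : α < 1) (f : ℝ → ℂ) (hf : Integrable f)
    (hmod : IntegrableOn (fun y => integralModulus f y / y ^ (1 + α)) (Ioi 0)) (k : ℝ) :
    FT (marchaudForward α f) k = (-(Complex.I * (k : ℂ))) ^ (α : ℂ) * FT f k := by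
  have hΓ : Complex.Gamma (-α) ≠ 0 := fun h => by
    have hΓ1 := Complex.Gamma_add_one (-α) (by simpa using hα0.ne')
    rw [h, mul_zero] at hΓ1
    exact Complex.Gamma_ne_zero_of_re_pos (by simpa using hα1) hΓ1
  rw [FT_marchaudForward hf hmod, symbolIntegral_eq hα0 hα1 (by simp)]
  push_cast [← Complex.Gamma_ofReal]
  field_simp

/-- for `0 < α < 1` and Schwartz `f`, the forward-shift Marchaud operator has
Fourier symbol `(−ik)^α` (principal branch): its Fourier transform at `k` equals
`(−ik)^α f̂(k)`. -/
theorem stmt3 (α : ℝ) (hα0 : 0 < α) (hα1 : α < 1) (f : SchwartzMap ℝ ℂ) (k : ℝ) :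
    FT (marchaudForward α (⇑f)) k = (-(Complex.I * (k : ℂ))) ^ (α : ℂ) * FT (⇑f) k :=
  stmt3_general α hα0 hα1 f f.integrable (integrableOn_integralModulus_div_rpow hα0 hα1
    f.integrable f.differentiable (SchwartzMap.derivCLM ℝ ℂ f).integrable) k
end
end

section
/- Let s>1/2 and f,g ∈ H^s(ℝ). Then D^α f·g → D f·g in H^{s−1}(ℝ) as α→1⁻, where D f·g = f'g − fg' is the classical first-order Hirota derivative; that is, ‖D^α f·g − (f'g − fg')‖_{H^{s−1}} → 0 as α→1⁻. -/
/-!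
Everything happens on the Fourier side. Write `⟨x⟩ = (1 + x²)^{1/2}`. For `0 ≤ α ≤ 1` the symbol of
`D^α f·g` is at most `⟨m⟩ + ⟨k-m⟩`, so the transform of `D^α f·g` at `k` is bounded, uniformly in
`α`, by the majorant `∫ (⟨m⟩ + ⟨k-m⟩) |F(m)| |G(k-m)| dm`. If `⟨·⟩^{s-1}` times the majorant is in
`L²`, then the majorant is finite for almost every `k`, and two applications of dominated
convergence finish: in `m`, for the pointwise limit `α → 1`, and in `k`, for the norm.

Since `⟨·⟩|F|` lies in weighted `L²` with exponent `t = s - 1` and `|G|` with exponent `s`, the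
integrability is the product estimate `H^t · H^s ⊆ H^t` for `s > 1/2` and `|t| ≤ s`. With
`k = m + n`, the triangle inequality for the bracket gives
`⟨k⟩^t ≤ 2^{|t|} (⟨k⟩^{-s} + ⟨m⟩^{-s} + ⟨n⟩^{-s}) ⟨m⟩^t ⟨n⟩^s`.
Here `w = ⟨·⟩^{-s}` is in `L²`, and for `U = ⟨·⟩^t u` and `V = ⟨·⟩^s v` in `L²` the weighted
convolution `⟨·⟩^t (u ⋆ v)` is at most a constant times `w (U ⋆ V) + (w U) ⋆ V + U ⋆ (w V)`. The
first term is in `L²` because `U ⋆ V` is bounded, the other two by Young's inequality, since `w U`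
and `w V` are in `L¹`.
-/

open MeasureTheory

noncomputable section

/-- Squared `H^s` norm, expressed on the Fourier side:
`‖f‖²_{H^s} = (1/2π) ∫ (1+|k|²)^s |f̂(k)|² dk`, where `F = f̂`. -/
def hsNormSq (s : ℝ) (F : ℝ → ℂ) : ℝ :=
  (2 * Real.pi)⁻¹ * ∫ k : ℝ, (1 + k ^ 2) ^ s * ‖F k‖ ^ 2

/-- Membership of a function in `H^s(ℝ)`, expressed through its Fourier transform `F = f̂`. -/
def MemHsFT (s : ℝ) (F : ℝ → ℂ) : Prop :=
  AEStronglyMeasurable F volume ∧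
    Integrable (fun k : ℝ => (1 + k ^ 2) ^ s * ‖F k‖ ^ 2) volume

/-- Fourier transform of the bilinear expression `D^α f·g = (D^α f) g − f (D^α g)`,
computed from the Fourier transforms `F = f̂`, `G = ĝ`:
`F[D^α f·g](k) = (1/2π) ∫ ((im)^α − (i(k−m))^α) F(m) G(k−m) dm` (principal branch).
For `α = 1` this is the Fourier transform of the classical Hirota derivative
`D f·g = f'g − fg'`, since `z^1 = z`. -/
def hirotaSymbolFT (α : ℝ) (F G : ℝ → ℂ) (k : ℝ) : ℂ :=
  ((2 * Real.pi : ℝ) : ℂ)⁻¹ *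
    ∫ m : ℝ, ((Complex.I * (m : ℂ)) ^ (α : ℂ) - (Complex.I * ((k - m : ℝ) : ℂ)) ^ (α : ℂ)) *
      F m * G (k - m)

open scoped ENNReal Topology

section Convolution

variable {α : Type*} [MeasurableSpace α] {μ : Measure α}

theorem memLp_two_iff_lintegral_sq {f : α → ℝ≥0∞} :
    MemLp f 2 μ ↔ AEMeasurable f μ ∧ ∫⁻ x, f x ^ 2 ∂μ ≠ ∞ := by
  refine and_congr aestronglyMeasurable_iff_aemeasurable ?_
  rw [eLpNorm_lt_top_iff_lintegral_rpow_enorm_lt_top two_ne_zero ENNReal.ofNat_ne_top,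
    lt_top_iff_ne_top]
  simp only [ENNReal.toReal_ofNat, enorm_eq_self, ENNReal.rpow_two]

theorem lintegral_mul_le_eLpNorm_mul_eLpNorm {p q : ℝ} (hpq : p.HolderConjugate q)
    {f g : α → ℝ≥0∞} (hf : AEMeasurable f μ) (hg : AEMeasurable g μ) :
    ∫⁻ x, f x * g x ∂μ ≤ eLpNorm f (.ofReal p) μ * eLpNorm g (.ofReal q) μ := by
  rw [eLpNorm_eq_lintegral_rpow_enorm_toReal (by simpa using hpq.pos) ENNReal.ofReal_ne_top,
    eLpNorm_eq_lintegral_rpow_enorm_toReal (by simpa using hpq.symm.pos) ENNReal.ofReal_ne_top,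
    ENNReal.toReal_ofReal hpq.nonneg, ENNReal.toReal_ofReal hpq.symm.nonneg]
  exact ENNReal.lintegral_mul_le_Lp_mul_Lq μ hpq hf hg

theorem memLp_one_mul {p q : ℝ} (hpq : p.HolderConjugate q) {f g : α → ℝ≥0∞}
    (hf : MemLp f (.ofReal p) μ) (hg : MemLp g (.ofReal q) μ) : MemLp (f * g) 1 μ := by
  refine ⟨(hf.1.aemeasurable.mul hg.1.aemeasurable).aestronglyMeasurable, ?_⟩
  rw [eLpNorm_one_eq_lintegral_enorm]
  exact (lintegral_mul_le_eLpNorm_mul_eLpNorm hpq hf.1.aemeasurable hg.1.aemeasurable).trans_lt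
    (ENNReal.mul_lt_top hf.2 hg.2)

variable {A : Type*} [MeasurableSpace A] [AddCommGroup A] [MeasurableAdd₂ A] [MeasurableNeg A]
  {ν : Measure A} [ν.IsAddLeftInvariant]

theorem aemeasurable_comp_sub_left [ν.IsNegInvariant] {β : Type*} [MeasurableSpace β] {f : A → β}
    (hf : AEMeasurable f ν) (x : A) : AEMeasurable (fun y => f (x - y)) ν :=
  hf.comp_quasiMeasurePreserving (Measure.measurePreserving_sub_left ν x).quasiMeasurePreserving

theorem lconvolution_le_eLpNorm_mul_eLpNorm [ν.IsNegInvariant] {p q : ℝ}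
    (hpq : p.HolderConjugate q) {f g : A → ℝ≥0∞} (hf : AEMeasurable f ν) (hg : AEMeasurable g ν)
    (x : A) : (f ⋆ₗ[ν] g) x ≤ eLpNorm f (.ofReal p) ν * eLpNorm g (.ofReal q) ν := by
  have hrefl : MeasurePreserving (fun y => -y + x) ν ν := by
    simpa only [neg_add_eq_sub] using Measure.measurePreserving_sub_left ν x
  calc (f ⋆ₗ[ν] g) x
      ≤ eLpNorm f (.ofReal p) ν * eLpNorm (fun y => g (-y + x)) (.ofReal q) ν :=
        lintegral_mul_le_eLpNorm_mul_eLpNorm hpq hf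
          (hg.comp_quasiMeasurePreserving hrefl.quasiMeasurePreserving)
    _ = eLpNorm f (.ofReal p) ν * eLpNorm g (.ofReal q) ν := by
        rw [← eLpNorm_comp_measurePreserving hg.aestronglyMeasurable hrefl, Function.comp_def]

variable [SFinite ν]

theorem memLp_mul_lconvolution [ν.IsNegInvariant] {p q : ℝ} (hpq : p.HolderConjugate q)
    {r : ℝ≥0∞} {w f g : A → ℝ≥0∞} (hw : MemLp w r ν) (hf : MemLp f (.ofReal p) ν)
    (hg : MemLp g (.ofReal q) ν) : MemLp (fun x => w x * (f ⋆ₗ[ν] g) x) r ν := by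
  have hfm := hf.1.aemeasurable
  have hgm := hg.1.aemeasurable
  refine hw.of_le_mul' (c := (eLpNorm f (.ofReal p) ν * eLpNorm g (.ofReal q) ν).toNNReal)
    (hw.1.aemeasurable.mul (aemeasurable_lconvolution hfm hgm)).aestronglyMeasurable
    (.of_forall fun x => ?_)
  rw [ENNReal.coe_toNNReal (ENNReal.mul_ne_top hf.2.ne hg.2.ne), enorm_eq_self, enorm_eq_self,
    mul_comm]
  gcongr
  exact lconvolution_le_eLpNorm_mul_eLpNorm hpq hfm hgm x

theorem lconvolution_rpow_le {p : ℝ} (hp : 1 ≤ p) {f g : A → ℝ≥0∞} (hf : AEMeasurable f ν)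
    (hg : AEMeasurable g ν) (x : A) :
    (f ⋆ₗ[ν] g) x ^ p ≤ (∫⁻ y, f y ∂ν) ^ (p - 1) * (f ⋆ₗ[ν] fun y => g y ^ p) x := by
  have hp0 : 0 < p := by positivity
  have hinv : p⁻¹ ≤ 1 := inv_le_one_of_one_le₀ hp
  have hsplit (y : A) : f y * g (-y + x) =
      f y ^ (1 - p⁻¹) * (f y * g (-y + x) ^ p) ^ p⁻¹ := by
    rw [ENNReal.mul_rpow_of_nonneg _ _ (by positivity), ENNReal.rpow_rpow_inv hp0.ne', ← mul_assoc,
      ← ENNReal.rpow_add_of_nonneg _ _ (by linarith) (by positivity), sub_add_cancel,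
      ENNReal.rpow_one]
  have hholder : (f ⋆ₗ[ν] g) x ≤
      (∫⁻ y, f y ∂ν) ^ (1 - p⁻¹) * (f ⋆ₗ[ν] fun y => g y ^ p) x ^ p⁻¹ := by
    simp only [lconvolution_def, hsplit]
    exact ENNReal.lintegral_mul_norm_pow_le hf (by fun_prop) (by linarith) (by positivity) (by ring)
  calc (f ⋆ₗ[ν] g) x ^ p
      ≤ ((∫⁻ y, f y ∂ν) ^ (1 - p⁻¹) * (f ⋆ₗ[ν] fun y => g y ^ p) x ^ p⁻¹) ^ p := by gcongr
    _ = (∫⁻ y, f y ∂ν) ^ (p - 1) * (f ⋆ₗ[ν] fun y => g y ^ p) x := by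
        rw [ENNReal.mul_rpow_of_nonneg _ _ hp0.le, ENNReal.rpow_inv_rpow hp0.ne',
          ← ENNReal.rpow_mul, sub_mul, inv_mul_cancel₀ hp0.ne', one_mul]

theorem lintegral_lconvolution {f g : A → ℝ≥0∞} (hf : AEMeasurable f ν) (hg : AEMeasurable g ν) :
    ∫⁻ x, (f ⋆ₗ[ν] g) x ∂ν = (∫⁻ x, f x ∂ν) * ∫⁻ x, g x ∂ν := by
  simp only [lconvolution_def]
  rw [lintegral_lintegral_swap (by fun_prop), ← lintegral_mul_const'' _ hf]
  refine lintegral_congr fun y => ?_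
  rw [lintegral_const_mul'' _ (by fun_prop), lintegral_add_left_eq_self]

theorem eLpNorm_lconvolution_le {p : ℝ≥0∞} (hp : 1 ≤ p) (hp_top : p ≠ ∞) {f g : A → ℝ≥0∞}
    (hf : AEMeasurable f ν) (hg : AEMeasurable g ν) :
    eLpNorm (f ⋆ₗ[ν] g) p ν ≤ eLpNorm f 1 ν * eLpNorm g p ν := by
  have hr : 1 ≤ p.toReal := ENNReal.toReal_mono hp_top hp
  have hp0 : p ≠ 0 := (one_pos.trans_le hp).ne'
  rw [eLpNorm_one_eq_lintegral_enorm, eLpNorm_eq_lintegral_rpow_enorm_toReal hp0 hp_top,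
    eLpNorm_eq_lintegral_rpow_enorm_toReal hp0 hp_top]
  simp only [enorm_eq_self, one_div]
  generalize p.toReal = r at hr
  rw [ENNReal.rpow_inv_le_iff (by positivity), ENNReal.mul_rpow_of_nonneg _ _ (by positivity),
    ENNReal.rpow_inv_rpow (by positivity)]
  calc ∫⁻ x, (f ⋆ₗ[ν] g) x ^ r ∂ν
      ≤ ∫⁻ x, (∫⁻ y, f y ∂ν) ^ (r - 1) * (f ⋆ₗ[ν] fun y => g y ^ r) x ∂ν :=
        lintegral_mono fun x => lconvolution_rpow_le hr hf hg x
    _ = (∫⁻ y, f y ∂ν) ^ (r - 1) * ((∫⁻ y, f y ∂ν) ^ (1 : ℝ) * ∫⁻ y, g y ^ r ∂ν) := by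
        rw [lintegral_const_mul'' _ (aemeasurable_lconvolution hf (by fun_prop)),
          lintegral_lconvolution hf (by fun_prop), ENNReal.rpow_one]
    _ = (∫⁻ y, f y ∂ν) ^ r * ∫⁻ y, g y ^ r ∂ν := by
        rw [← mul_assoc, ← ENNReal.rpow_add_of_nonneg _ _ (by linarith) zero_le_one, sub_add_cancel]

theorem memLp_lconvolution {p : ℝ≥0∞} (hp : 1 ≤ p) (hp_top : p ≠ ∞) {f g : A → ℝ≥0∞}
    (hf : MemLp f 1 ν) (hg : MemLp g p ν) : MemLp (f ⋆ₗ[ν] g) p ν :=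
  ⟨(aemeasurable_lconvolution hf.1.aemeasurable hg.1.aemeasurable).aestronglyMeasurable,
    (eLpNorm_lconvolution_le hp hp_top hf.1.aemeasurable hg.1.aemeasurable).trans_lt
      (ENNReal.mul_lt_top hf.2 hg.2)⟩

theorem mul_lconvolution_le_of_forall_le {C : ℝ≥0∞} {K w u v U V : A → ℝ≥0∞}
    (hw : AEMeasurable w ν) (hU : AEMeasurable U ν) (hV : AEMeasurable V ν)
    (h : ∀ x y, K (x + y) * (u x * v y) ≤ C * ((w (x + y) + w x + w y) * (U x * V y))) (x : A) :
    K x * (u ⋆ₗ[ν] v) x ≤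
      C * (w x * (U ⋆ₗ[ν] V) x + ((w * U) ⋆ₗ[ν] V) x + (U ⋆ₗ[ν] (w * V)) x) := by
  calc K x * (u ⋆ₗ[ν] v) x
      ≤ ∫⁻ y, K x * (u y * v (-y + x)) ∂ν := lintegral_const_mul_le _ _
    _ ≤ ∫⁻ y, C * (w x * (U y * V (-y + x)) + w y * U y * V (-y + x) +
          U y * (w (-y + x) * V (-y + x))) ∂ν := by
        refine lintegral_mono fun y => ?_
        have hy := h y (-y + x)
        rw [add_neg_cancel_left] at hy
        exact hy.trans_eq (by ring)
    _ = C * (w x * (U ⋆ₗ[ν] V) x + ((w * U) ⋆ₗ[ν] V) x + (U ⋆ₗ[ν] (w * V)) x) := by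
        simp only [lconvolution_def, Pi.mul_apply]
        rw [lintegral_const_mul'' _ (by fun_prop), lintegral_add_left' (by fun_prop),
          lintegral_add_left' (by fun_prop), lintegral_const_mul'' _ (by fun_prop)]

end Convolution

section JapaneseBracket

variable {E : Type*} [SeminormedAddCommGroup E]

/-- The Japanese bracket `⟨x⟩ = (1 + ‖x‖²)^{1/2}`, the weight of Sobolev norms on the Fourier side.
It takes values in `ℝ≥0∞` so that weighted convolutions need no integrability side conditions. -/
def japaneseBracket (x : E) : ℝ≥0∞ := ENNReal.ofReal √(1 + ‖x‖ ^ 2)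

theorem japaneseBracket_ne_top (x : E) : japaneseBracket x ≠ ∞ := ENNReal.ofReal_ne_top

theorem one_le_japaneseBracket (x : E) : 1 ≤ japaneseBracket x :=
  ENNReal.one_le_ofReal.2 (Real.one_le_sqrt.2 (by linarith [sq_nonneg ‖x‖]))

theorem japaneseBracket_ne_zero (x : E) : japaneseBracket x ≠ 0 :=
  (one_pos.trans_le (one_le_japaneseBracket x)).ne'

theorem enorm_le_japaneseBracket (x : E) : ‖x‖ₑ ≤ japaneseBracket x := by
  rw [← ofReal_norm]
  exact ENNReal.ofReal_le_ofReal (Real.le_sqrt_of_sq_le (by linarith))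

theorem japaneseBracket_neg (x : E) : japaneseBracket (-x) = japaneseBracket x := by
  simp only [japaneseBracket, norm_neg]

theorem japaneseBracket_add_le (x y : E) :
    japaneseBracket (x + y) ≤ japaneseBracket x + japaneseBracket y := by
  rw [japaneseBracket, japaneseBracket, japaneseBracket,
    ← ENNReal.ofReal_add (Real.sqrt_nonneg _) (Real.sqrt_nonneg _)]
  refine ENNReal.ofReal_le_ofReal (Real.sqrt_le_iff.2 ⟨by positivity, ?_⟩)
  have hx : ‖x‖ ≤ √(1 + ‖x‖ ^ 2) := Real.le_sqrt_of_sq_le (by linarith)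
  have hy : ‖y‖ ≤ √(1 + ‖y‖ ^ 2) := Real.le_sqrt_of_sq_le (by linarith)
  have hxy : ‖x‖ * ‖y‖ ≤ √(1 + ‖x‖ ^ 2) * √(1 + ‖y‖ ^ 2) := by gcongr
  have hnorm : ‖x + y‖ ^ 2 ≤ (‖x‖ + ‖y‖) ^ 2 := by gcongr; exact norm_add_le x y
  linarith [Real.sq_sqrt (by positivity : 0 ≤ 1 + ‖x‖ ^ 2),
    Real.sq_sqrt (by positivity : 0 ≤ 1 + ‖y‖ ^ 2)]

theorem japaneseBracket_le_add_of_add (x y : E) :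
    japaneseBracket x ≤ japaneseBracket (x + y) + japaneseBracket y := by
  simpa only [add_neg_cancel_right, japaneseBracket_neg] using japaneseBracket_add_le (x + y) (-y)

theorem japaneseBracket_rpow_sq (x : E) (s : ℝ) :
    (japaneseBracket x ^ s) ^ 2 = ENNReal.ofReal ((1 + ‖x‖ ^ 2) ^ s) := by
  rw [← ENNReal.rpow_natCast, ← ENNReal.rpow_mul, mul_comm, ENNReal.rpow_mul, ENNReal.rpow_natCast,
    japaneseBracket, ← ENNReal.ofReal_pow (Real.sqrt_nonneg _), Real.sq_sqrt (by positivity),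
    ENNReal.ofReal_rpow_of_pos (by positivity)]

theorem enorm_one_add_sq_rpow_mul_norm_sq {F : Type*} [SeminormedAddCommGroup F] (s k : ℝ)
    (z : F) :
    ‖(1 + k ^ 2) ^ s * ‖z‖ ^ 2‖ₑ = (japaneseBracket k ^ s * ‖z‖ₑ) ^ 2 := by
  rw [mul_pow, japaneseBracket_rpow_sq, Real.norm_eq_abs, sq_abs, enorm_mul, enorm_pow, enorm_norm,
    Real.enorm_of_nonneg (by positivity)]

@[fun_prop]
theorem measurable_japaneseBracket [MeasurableSpace E] [OpensMeasurableSpace E] :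
    Measurable (japaneseBracket : E → ℝ≥0∞) := by
  unfold japaneseBracket
  fun_prop

end JapaneseBracket

theorem memLp_two_japaneseBracket_rpow_neg {E : Type*} [NormedAddCommGroup E] [NormedSpace ℝ E]
    [FiniteDimensional ℝ E] [MeasurableSpace E] [BorelSpace E] {μ : Measure E} [μ.IsAddHaarMeasure]
    {s : ℝ} (hs : Module.finrank ℝ E < 2 * s) :
    MemLp (fun x : E => japaneseBracket x ^ (-s)) 2 μ := by
  refine memLp_two_iff_lintegral_sq.2 ⟨by fun_prop, ?_⟩
  have h := (integrable_rpow_neg_one_add_norm_sq (μ := μ) hs).lintegral_lt_top.ne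
  simpa only [japaneseBracket_rpow_sq, neg_div, mul_div_cancel_left₀ s two_ne_zero] using h

section ProductEstimate

variable {x y z : ℝ≥0∞} {s t : ℝ}

theorem rpow_le_two_rpow_mul_of_nonneg (hy : y ≠ 0) (hy' : y ≠ ∞) (hz : z ≠ 0) (hz' : z ≠ ∞)
    (ht : 0 ≤ t) (hts : t ≤ s) (h : x ≤ y + z) :
    x ^ t ≤ 2 ^ t * ((y ^ (-s) + z ^ (-s)) * (y ^ t * z ^ s)) := by
  rcases le_total z y with hzy | hyz
  · calc x ^ t ≤ (2 * y) ^ t := by gcongr; rw [two_mul]; exact h.trans (by gcongr)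
      _ = 2 ^ t * (z ^ (-s) * (y ^ t * z ^ s)) := by
        rw [ENNReal.mul_rpow_of_nonneg _ _ ht, mul_left_comm (z ^ (-s)),
          ← ENNReal.rpow_add _ _ hz hz', neg_add_cancel, ENNReal.rpow_zero, mul_one]
      _ ≤ _ := by gcongr; exact le_add_self
  · calc x ^ t ≤ (2 * z) ^ t := by gcongr; rw [two_mul]; exact h.trans (by gcongr)
      _ = 2 ^ t * (z ^ (t - s) * z ^ s) := by
        rw [ENNReal.mul_rpow_of_nonneg _ _ ht, ← ENNReal.rpow_add _ _ hz hz', sub_add_cancel]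
      _ ≤ 2 ^ t * (y ^ (t - s) * z ^ s) := by
        gcongr 2 ^ t * (?_ * _)
        rw [← neg_sub s t, ENNReal.rpow_neg, ENNReal.rpow_neg]
        gcongr
      _ = 2 ^ t * (y ^ (-s) * (y ^ t * z ^ s)) := by
        rw [← mul_assoc (y ^ (-s)), ← ENNReal.rpow_add _ _ hy hy', neg_add_eq_sub]
      _ ≤ _ := by gcongr; exact le_self_add

theorem rpow_le_two_rpow_abs_mul (hx : x ≠ 0) (hx' : x ≠ ∞) (hy : y ≠ 0) (hy' : y ≠ ∞) (hz : z ≠ 0)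
    (hz' : z ≠ ∞) (ht : |t| ≤ s) (hxyz : x ≤ y + z) (hyxz : y ≤ x + z) :
    x ^ t ≤ 2 ^ |t| * ((x ^ (-s) + y ^ (-s) + z ^ (-s)) * (y ^ t * z ^ s)) := by
  rcases le_total 0 t with h0 | h0
  · rw [abs_of_nonneg h0] at ht ⊢
    refine (rpow_le_two_rpow_mul_of_nonneg hy hy' hz hz' h0 ht hxyz).trans ?_
    gcongr
    exact le_add_self
  · rw [abs_of_nonpos h0] at ht ⊢
    -- For negative exponents, exchange the roles of `x` and `y`.
    have hswap := rpow_le_two_rpow_mul_of_nonneg hx hx' hz hz' (neg_nonneg.2 h0) ht hyxz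
    have hxx : x ^ t * x ^ (-t) = 1 := by
      rw [← ENNReal.rpow_add _ _ hx hx', add_neg_cancel, ENNReal.rpow_zero]
    have hyy : y ^ t * y ^ (-t) = 1 := by
      rw [← ENNReal.rpow_add _ _ hy hy', add_neg_cancel, ENNReal.rpow_zero]
    calc x ^ t = x ^ t * y ^ t * y ^ (-t) := by rw [mul_assoc, hyy, mul_one]
      _ ≤ x ^ t * y ^ t * (2 ^ (-t) * ((x ^ (-s) + z ^ (-s)) * (x ^ (-t) * z ^ s))) := by gcongr
      _ = x ^ t * x ^ (-t) * (2 ^ (-t) * ((x ^ (-s) + z ^ (-s)) * (y ^ t * z ^ s))) := by ring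
      _ ≤ 2 ^ (-t) * ((x ^ (-s) + y ^ (-s) + z ^ (-s)) * (y ^ t * z ^ s)) := by
        rw [hxx, one_mul]
        gcongr
        exact le_self_add

theorem japaneseBracket_add_rpow_le {E : Type*} [SeminormedAddCommGroup E] (ht : |t| ≤ s)
    (x y : E) :
    japaneseBracket (x + y) ^ t ≤
      2 ^ |t| * ((japaneseBracket (x + y) ^ (-s) + japaneseBracket x ^ (-s) +
        japaneseBracket y ^ (-s)) * (japaneseBracket x ^ t * japaneseBracket y ^ s)) := by
  have hne (z : E) := japaneseBracket_ne_zero z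
  have hne_top (z : E) := japaneseBracket_ne_top z
  exact rpow_le_two_rpow_abs_mul (hne _) (hne_top _) (hne _) (hne_top _) (hne _) (hne_top _) ht
    (japaneseBracket_add_le x y) (japaneseBracket_le_add_of_add x y)

end ProductEstimate

section MemWeightedL2

variable {E : Type*} [SeminormedAddCommGroup E] [MeasurableSpace E] {μ : Measure E} {r s : ℝ}
  {u v : E → ℝ≥0∞}

/-- The condition `⟨·⟩ˢ u ∈ L²(μ)`. For `u = |f̂|` it says that `f` lies in the Sobolev space
`Hˢ`. -/
def MemWeightedL2 (s : ℝ) (u : E → ℝ≥0∞) (μ : Measure E) : Prop :=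
  MemLp (fun x => japaneseBracket x ^ s * u x) 2 μ

theorem MemWeightedL2.add (hu : MemWeightedL2 s u μ) (hv : MemWeightedL2 s v μ) :
    MemWeightedL2 s (u + v) μ := by
  simpa only [MemWeightedL2, Pi.add_apply, mul_add] using! MemLp.add hu hv

theorem MemWeightedL2.ae_ne_top (hu : MemWeightedL2 s u μ) : ∀ᵐ x ∂μ, u x ≠ ∞ := by
  obtain ⟨hmeas, hfin⟩ := memLp_two_iff_lintegral_sq.1 hu
  filter_upwards [ae_lt_top' (hmeas.pow_const 2) hfin] with x hx hux
  have hweight : japaneseBracket x ^ s ≠ 0 := by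
    simp [ENNReal.rpow_eq_zero_iff, japaneseBracket_ne_zero, japaneseBracket_ne_top]
  rw [hux, ENNReal.mul_top hweight] at hx
  simp at hx

theorem memWeightedL2_japaneseBracket_rpow_mul :
    MemWeightedL2 (s - r) (fun x => japaneseBracket x ^ r * u x) μ ↔ MemWeightedL2 s u μ := by
  have hcancel (x : E) : japaneseBracket x ^ (s - r) * (japaneseBracket x ^ r * u x) =
      japaneseBracket x ^ s * u x := by
    rw [← mul_assoc, ← ENNReal.rpow_add _ _ (japaneseBracket_ne_zero x) (japaneseBracket_ne_top x),
      sub_add_cancel]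
  simp only [MemWeightedL2, hcancel]

theorem MemWeightedL2.aemeasurable [OpensMeasurableSpace E] (hu : MemWeightedL2 s u μ) :
    AEMeasurable u μ := by
  have hcancel : u = fun x => japaneseBracket x ^ (-s) * (japaneseBracket x ^ s * u x) := by
    ext x
    rw [← mul_assoc, ← ENNReal.rpow_add _ _ (japaneseBracket_ne_zero x) (japaneseBracket_ne_top x),
      neg_add_cancel, ENNReal.rpow_zero, one_mul]
  rw [hcancel]
  exact (measurable_japaneseBracket.pow_const _).aemeasurable.mul hu.1.aemeasurable

end MemWeightedL2

/-- Convolution on the Fourier side is multiplication in physical space, so this is the product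
estimate `Hᵗ · Hˢ ⊆ Hᵗ`. -/
theorem MemWeightedL2.lconvolution {E : Type*} [NormedAddCommGroup E] [NormedSpace ℝ E]
    [FiniteDimensional ℝ E] [MeasurableSpace E] [BorelSpace E] {μ : Measure E} [μ.IsAddHaarMeasure]
    {s t : ℝ} {u v : E → ℝ≥0∞} (hs : Module.finrank ℝ E < 2 * s) (ht : |t| ≤ s)
    (hu : MemWeightedL2 t u μ) (hv : MemWeightedL2 s v μ) : MemWeightedL2 t (u ⋆ₗ[μ] v) μ := by
  set U : E → ℝ≥0∞ := fun x => japaneseBracket x ^ t * u x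
  set V : E → ℝ≥0∞ := fun x => japaneseBracket x ^ s * v x
  set w : E → ℝ≥0∞ := fun x => japaneseBracket x ^ (-s)
  have hU : MemLp U (.ofReal 2) μ := by rw [ENNReal.ofReal_ofNat]; exact hu
  have hV : MemLp V (.ofReal 2) μ := by rw [ENNReal.ofReal_ofNat]; exact hv
  have hw : MemLp w (.ofReal 2) μ := by
    rw [ENNReal.ofReal_ofNat]; exact memLp_two_japaneseBracket_rpow_neg hs
  have hconj := Real.HolderConjugate.two_two
  have hwUV : MemLp (fun x => w x * (U ⋆ₗ[μ] V) x) 2 μ :=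
    memLp_mul_lconvolution hconj (memLp_two_japaneseBracket_rpow_neg hs) hU hV
  have hwU_V : MemLp ((w * U) ⋆ₗ[μ] V) 2 μ :=
    memLp_lconvolution one_le_two ENNReal.ofNat_ne_top (memLp_one_mul hconj hw hU) hv
  have hU_wV : MemLp (U ⋆ₗ[μ] (w * V)) 2 μ := by
    rw [lconvolution_comm]
    exact memLp_lconvolution one_le_two ENNReal.ofNat_ne_top (memLp_one_mul hconj hw hV) hu
  have hmeas := aemeasurable_lconvolution hu.aemeasurable hv.aemeasurable
  refine ((hwUV.add hwU_V).add hU_wV).of_le_mul' (c := 2 ^ |t|)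
    ((measurable_japaneseBracket.pow_const _).aemeasurable.mul hmeas).aestronglyMeasurable
    (.of_forall fun k => ?_)
  simp only [enorm_eq_self, Pi.add_apply]
  rw [ENNReal.coe_rpow_of_nonneg _ (abs_nonneg t), ENNReal.coe_ofNat]
  refine mul_lconvolution_le_of_forall_le (K := fun x => japaneseBracket x ^ t) hw.1.aemeasurable
    hU.1.aemeasurable hV.1.aemeasurable (fun x y => ?_) k
  calc japaneseBracket (x + y) ^ t * (u x * v y)
      ≤ 2 ^ |t| * ((w (x + y) + w x + w y) * (japaneseBracket x ^ t * japaneseBracket y ^ s)) *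
          (u x * v y) := by gcongr; exact japaneseBracket_add_rpow_le ht x y
    _ = 2 ^ |t| * ((w (x + y) + w x + w y) * (U x * V y)) := by simp only [U, V]; ring

section DominatedConvergence

variable {ι α E : Type*} [MeasurableSpace α] {μ : Measure α} [NormedAddCommGroup E]
  [NormedSpace ℝ E] {l : Filter ι} [l.IsCountablyGenerated]

theorem tendsto_integral_filter_of_enorm_le {f : ι → α → E} {g : α → E} {bound : α → ℝ≥0∞}
    (hf : ∀ᶠ i in l, AEStronglyMeasurable (f i) μ)
    (hle : ∀ᶠ i in l, ∀ᵐ a ∂μ, ‖f i a‖ₑ ≤ bound a) (hbound : AEMeasurable bound μ)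
    (hfin : ∫⁻ a, bound a ∂μ ≠ ∞) (hlim : ∀ᵐ a ∂μ, Filter.Tendsto (fun i => f i a) l (𝓝 (g a))) :
    Filter.Tendsto (fun i => ∫ a, f i a ∂μ) l (𝓝 (∫ a, g a ∂μ)) := by
  refine tendsto_integral_filter_of_dominated_convergence (fun a => (bound a).toReal) hf ?_
    (integrable_toReal_of_lintegral_ne_top hbound hfin) hlim
  filter_upwards [hle] with i hi
  filter_upwards [hi, ae_lt_top' hbound hfin] with a ha htop
  rw [← toReal_enorm]
  exact ENNReal.toReal_mono htop.ne ha

end DominatedConvergence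

section SobolevNorm

variable {s : ℝ} {F : ℝ → ℂ}

theorem MemHsFT.memWeightedL2 (hF : MemHsFT s F) :
    MemWeightedL2 s (fun k => ‖F k‖ₑ) volume := by
  refine memLp_two_iff_lintegral_sq.2
    ⟨(measurable_japaneseBracket.pow_const s).aemeasurable.mul hF.1.enorm, ?_⟩
  simpa only [enorm_one_add_sq_rpow_mul_norm_sq] using! hF.2.2.ne

theorem tendsto_hsNormSq_zero_of_enorm_le {ι : Type*} {l : Filter ι} [l.IsCountablyGenerated]
    {D : ι → ℝ → ℂ} {M : ℝ → ℝ≥0∞} (hD : ∀ i, AEStronglyMeasurable (D i) volume)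
    (hM : MemWeightedL2 s M volume) (hle : ∀ᶠ i in l, ∀ᵐ k, ‖D i k‖ₑ ≤ M k)
    (hlim : ∀ᵐ k, Filter.Tendsto (fun i => D i k) l (𝓝 0)) :
    Filter.Tendsto (fun i => hsNormSq s (D i)) l (𝓝 0) := by
  have hbound := memLp_two_iff_lintegral_sq.1 hM
  have hint : Filter.Tendsto (fun i => ∫ k : ℝ, (1 + k ^ 2) ^ s * ‖D i k‖ ^ 2) l
      (𝓝 (∫ _ : ℝ, (0 : ℝ))) := by
    refine tendsto_integral_filter_of_enorm_le
      (.of_forall fun i => ?_) ?_ (hbound.1.pow_const 2) hbound.2 ?_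
    · exact (by fun_prop : Measurable fun k : ℝ => (1 + k ^ 2) ^ s).aestronglyMeasurable.mul
        ((hD i).norm.pow 2)
    · filter_upwards [hle] with i hi
      filter_upwards [hi] with k hk
      rw [enorm_one_add_sq_rpow_mul_norm_sq]
      gcongr
    · filter_upwards [hlim] with k hk
      simpa using (hk.norm.pow 2).const_mul ((1 + k ^ 2) ^ s)
  simpa [hsNormSq] using hint.const_mul (2 * Real.pi)⁻¹

end SobolevNorm

section BilinearMultiplier

variable {σ : ℝ → ℝ → ℂ} {F G : ℝ → ℂ} {r s : ℝ}

/-- The Fourier transform of the bilinear Fourier multiplier operator with symbol `σ(ξ, η)`,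
applied to the functions whose transforms are `F` and `G`. -/
def bilinearMultiplierFT (σ : ℝ → ℝ → ℂ) (F G : ℝ → ℂ) (k : ℝ) : ℂ :=
  ((2 * Real.pi : ℝ) : ℂ)⁻¹ * ∫ m : ℝ, σ m (k - m) * F m * G (k - m)

/-- A pointwise majorant of `bilinearMultiplierFT σ F G` for every symbol with
`|σ(ξ, η)| ≤ ⟨ξ⟩ʳ + ⟨η⟩ʳ`. -/
def multiplierMajorant (r : ℝ) (F G : ℝ → ℂ) : ℝ → ℝ≥0∞ :=
  ((fun m => japaneseBracket m ^ r * ‖F m‖ₑ) ⋆ₗ fun m => ‖G m‖ₑ) +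
    ((fun m => japaneseBracket m ^ r * ‖G m‖ₑ) ⋆ₗ fun m => ‖F m‖ₑ)

theorem multiplierMajorant_eq_lintegral (hF : AEMeasurable F volume) (hG : AEMeasurable G volume)
    (k : ℝ) :
    multiplierMajorant r F G k =
      ∫⁻ m, (japaneseBracket m ^ r + japaneseBracket (k - m) ^ r) * ‖F m‖ₑ * ‖G (k - m)‖ₑ := by
  have hmeas : AEMeasurable (fun m => japaneseBracket m ^ r * ‖F m‖ₑ * ‖G (k - m)‖ₑ) volume :=
    ((measurable_japaneseBracket.pow_const r).aemeasurable.mul hF.enorm).mul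
      (aemeasurable_comp_sub_left hG k).enorm
  rw [multiplierMajorant, Pi.add_apply,
    lconvolution_comm (f := fun m => japaneseBracket m ^ r * ‖G m‖ₑ)]
  simp only [lconvolution_def, neg_add_eq_sub]
  rw [← lintegral_add_left' hmeas]
  exact lintegral_congr fun m => by ring

theorem memWeightedL2_multiplierMajorant (hs : 1 / 2 < s) (hr : |s - r| ≤ s) (hF : MemHsFT s F)
    (hG : MemHsFT s G) : MemWeightedL2 (s - r) (multiplierMajorant r F G) volume := by
  have hdim : (Module.finrank ℝ ℝ : ℝ) < 2 * s := by
    rw [Module.finrank_self, Nat.cast_one]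
    linarith
  have hF' := hF.memWeightedL2
  have hG' := hG.memWeightedL2
  exact ((memWeightedL2_japaneseBracket_rpow_mul.2 hF').lconvolution hdim hr hG').add
    ((memWeightedL2_japaneseBracket_rpow_mul.2 hG').lconvolution hdim hr hF')

theorem enorm_bilinearMultiplierFT_le (hF : AEMeasurable F volume) (hG : AEMeasurable G volume)
    (hσ : ∀ ξ η, ‖σ ξ η‖ₑ ≤ japaneseBracket ξ ^ r + japaneseBracket η ^ r) (k : ℝ) :
    ‖bilinearMultiplierFT σ F G k‖ₑ ≤ multiplierMajorant r F G k := by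
  have hpi : ‖((2 * Real.pi : ℝ) : ℂ)⁻¹‖ₑ ≤ 1 := by
    rw [← ofReal_norm, ENNReal.ofReal_le_one, norm_inv, Complex.norm_real,
      Real.norm_of_nonneg Real.two_pi_pos.le]
    exact inv_le_one_of_one_le₀ (by linarith [Real.pi_gt_three])
  calc ‖bilinearMultiplierFT σ F G k‖ₑ
      ≤ 1 * ∫⁻ m, ‖σ m (k - m) * F m * G (k - m)‖ₑ := by
        rw [bilinearMultiplierFT, enorm_mul]
        gcongr
        exact enorm_integral_le_lintegral_enorm _
    _ ≤ multiplierMajorant r F G k := by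
        rw [one_mul, multiplierMajorant_eq_lintegral hF hG]
        gcongr with m
        rw [enorm_mul, enorm_mul]
        gcongr
        exact hσ m (k - m)

theorem aestronglyMeasurable_bilinearMultiplierFT (hσ : Measurable (Function.uncurry σ))
    (hF : AEMeasurable F volume) (hG : AEMeasurable G volume) :
    AEStronglyMeasurable (bilinearMultiplierFT σ F G) volume := by
  have hσ' : Measurable fun p : ℝ × ℝ => σ p.2 (p.1 - p.2) :=
    hσ.comp (measurable_snd.prodMk (measurable_fst.sub measurable_snd))
  have hG' : AEMeasurable (fun p : ℝ × ℝ => G (p.1 - p.2)) (volume.prod volume) :=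
    hG.comp_quasiMeasurePreserving (quasiMeasurePreserving_sub volume volume)
  exact ((hσ'.aemeasurable.mul hF.comp_snd).mul hG').aestronglyMeasurable.integral_prod_right'
    |>.const_mul _

theorem tendsto_bilinearMultiplierFT {ι : Type*} {l : Filter ι} [l.IsCountablyGenerated]
    {τ : ι → ℝ → ℝ → ℂ} (hτ : ∀ i, Measurable (Function.uncurry (τ i)))
    (hle : ∀ᶠ i in l, ∀ ξ η, ‖τ i ξ η‖ₑ ≤ japaneseBracket ξ ^ r + japaneseBracket η ^ r)
    (hlim : ∀ ξ η, Filter.Tendsto (fun i => τ i ξ η) l (𝓝 (σ ξ η)))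
    (hF : AEMeasurable F volume) (hG : AEMeasurable G volume) {k : ℝ}
    (hk : multiplierMajorant r F G k ≠ ∞) :
    Filter.Tendsto (fun i => bilinearMultiplierFT (τ i) F G k) l
      (𝓝 (bilinearMultiplierFT σ F G k)) := by
  have hGk := aemeasurable_comp_sub_left hG k
  have hbound : AEMeasurable (fun m =>
      (japaneseBracket m ^ r + japaneseBracket (k - m) ^ r) * ‖F m‖ₑ * ‖G (k - m)‖ₑ) volume :=
    ((by fun_prop : Measurable fun m => japaneseBracket m ^ r + japaneseBracket (k - m) ^ r)
      |>.aemeasurable.mul hF.enorm).mul hGk.enorm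
  rw [multiplierMajorant_eq_lintegral hF hG] at hk
  refine (tendsto_integral_filter_of_enorm_le (.of_forall fun i => ?_) ?_ hbound hk
    (.of_forall fun m => ((hlim _ _).mul_const _).mul_const _)).const_mul _
  · have hτk : Measurable fun m => τ i m (k - m) :=
      (hτ i).comp (measurable_id.prodMk (measurable_const.sub measurable_id))
    exact ((hτk.aemeasurable.mul hF).mul hGk).aestronglyMeasurable
  · filter_upwards [hle] with i hi
    refine .of_forall fun m => ?_
    rw [enorm_mul, enorm_mul]
    gcongr
    exact hi m (k - m)

theorem tendsto_hsNormSq_bilinearMultiplierFT_sub (hs : 1 / 2 < s) (hr : |s - r| ≤ s) {ι : Type*}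
    {l : Filter ι} [l.NeBot] [l.IsCountablyGenerated] {τ : ι → ℝ → ℝ → ℂ}
    (hτ : ∀ i, Measurable (Function.uncurry (τ i)))
    (hle : ∀ᶠ i in l, ∀ ξ η, ‖τ i ξ η‖ₑ ≤ japaneseBracket ξ ^ r + japaneseBracket η ^ r)
    (hlim : ∀ ξ η, Filter.Tendsto (fun i => τ i ξ η) l (𝓝 (σ ξ η)))
    (hF : MemHsFT s F) (hG : MemHsFT s G) :
    Filter.Tendsto (fun i => hsNormSq (s - r) fun k =>
      bilinearMultiplierFT (τ i) F G k - bilinearMultiplierFT σ F G k) l (𝓝 0) := by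
  have hFm := hF.1.aemeasurable
  have hGm := hG.1.aemeasurable
  have hσ : Measurable (Function.uncurry σ) :=
    measurable_of_tendsto_metrizable' l hτ (tendsto_pi_nhds.2 fun p => hlim p.1 p.2)
  have hσ_le (ξ η : ℝ) : ‖σ ξ η‖ₑ ≤ japaneseBracket ξ ^ r + japaneseBracket η ^ r :=
    le_of_tendsto (hlim ξ η).enorm (hle.mono fun i hi => hi ξ η)
  have hM := memWeightedL2_multiplierMajorant hs hr hF hG
  refine tendsto_hsNormSq_zero_of_enorm_le (fun i => ?_) (hM.add hM) ?_ ?_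
  · exact (aestronglyMeasurable_bilinearMultiplierFT (hτ i) hFm hGm).sub
      (aestronglyMeasurable_bilinearMultiplierFT hσ hFm hGm)
  · filter_upwards [hle] with i hi
    refine .of_forall fun k => ?_
    exact enorm_sub_le.trans (add_le_add (enorm_bilinearMultiplierFT_le hFm hGm hi k)
      (enorm_bilinearMultiplierFT_le hFm hGm hσ_le k))
  · filter_upwards [hM.ae_ne_top] with k hk
    exact tendsto_sub_nhds_zero_iff.2 (tendsto_bilinearMultiplierFT hτ hle hlim hFm hGm hk)

end BilinearMultiplier

section Hirota

/-- The symbol `(iξ)^α - (iη)^α` of the fractional Hirota operator `D^α f·g`. -/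
def hirotaMultiplier (α : ℝ) (ξ η : ℝ) : ℂ :=
  (Complex.I * ξ) ^ (α : ℂ) - (Complex.I * η) ^ (α : ℂ)

theorem hirotaSymbolFT_eq_bilinearMultiplierFT (α : ℝ) (F G : ℝ → ℂ) :
    hirotaSymbolFT α F G = bilinearMultiplierFT (hirotaMultiplier α) F G := rfl

theorem enorm_I_mul_cpow_le {α β : ℝ} (hα : 0 ≤ α) (hαβ : α ≤ β) (x : ℝ) :
    ‖(Complex.I * x) ^ (α : ℂ)‖ₑ ≤ japaneseBracket x ^ β := by
  have hnorm : ‖(Complex.I * x) ^ (α : ℂ)‖ₑ = ‖x‖ₑ ^ α := by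
    rw [← ofReal_norm, Complex.norm_cpow_real, norm_mul, Complex.norm_I, one_mul,
      Complex.norm_real, ← ENNReal.ofReal_rpow_of_nonneg (norm_nonneg x) hα, ofReal_norm]
  calc ‖(Complex.I * x) ^ (α : ℂ)‖ₑ = ‖x‖ₑ ^ α := hnorm
    _ ≤ japaneseBracket x ^ α := by gcongr; exact enorm_le_japaneseBracket x
    _ ≤ japaneseBracket x ^ β := ENNReal.rpow_le_rpow_of_exponent_le (one_le_japaneseBracket x) hαβ

theorem enorm_hirotaMultiplier_le {α β : ℝ} (hα : 0 ≤ α) (hαβ : α ≤ β) (ξ η : ℝ) :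
    ‖hirotaMultiplier α ξ η‖ₑ ≤ japaneseBracket ξ ^ β + japaneseBracket η ^ β :=
  enorm_sub_le.trans
    (add_le_add (enorm_I_mul_cpow_le hα hαβ ξ) (enorm_I_mul_cpow_le hα hαβ η))

theorem measurable_hirotaMultiplier (α : ℝ) :
    Measurable (Function.uncurry (hirotaMultiplier α)) := by
  unfold hirotaMultiplier Function.uncurry
  fun_prop

theorem tendsto_hirotaMultiplier {β : ℝ} (hβ : β ≠ 0) (ξ η : ℝ) :
    Filter.Tendsto (fun α => hirotaMultiplier α ξ η) (𝓝 β) (𝓝 (hirotaMultiplier β ξ η)) := by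
  have hcpow (z : ℂ) : Filter.Tendsto (fun α : ℝ => z ^ (α : ℂ)) (𝓝 β) (𝓝 (z ^ (β : ℂ))) :=
    (continuousAt_const_cpow' (Complex.ofReal_ne_zero.2 hβ)).tendsto.comp
      (Complex.continuous_ofReal.tendsto β)
  exact (hcpow _).sub (hcpow _)

end Hirota

/-- for `s > 1/2` and `f, g ∈ H^s(ℝ)`, `D^α f·g → D f·g = f'g − fg'` in
`H^{s−1}(ℝ)` as `α → 1⁻`, i.e. `‖D^α f·g − (f'g − fg')‖_{H^{s−1}} → 0`. -/
theorem stmt7 (s : ℝ) (hs : 1 / 2 < s) (F G : ℝ → ℂ)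
    (hF : MemHsFT s F) (hG : MemHsFT s G) :
    Filter.Tendsto
      (fun α : ℝ => Real.sqrt (hsNormSq (s - 1)
        (fun k => hirotaSymbolFT α F G k - hirotaSymbolFT 1 F G k)))
      (nhdsWithin 1 (Set.Iio 1)) (nhds 0) := by
  have hexp : ∀ᶠ α : ℝ in 𝓝[<] 1, 0 ≤ α ∧ α ≤ 1 := by
    filter_upwards [Ioo_mem_nhdsLT one_pos] with α hα using ⟨hα.1.le, hα.2.le⟩
  have hle : ∀ᶠ α : ℝ in 𝓝[<] 1, ∀ ξ η,
      ‖hirotaMultiplier α ξ η‖ₑ ≤ japaneseBracket ξ ^ (1 : ℝ) + japaneseBracket η ^ (1 : ℝ) :=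
    hexp.mono fun α hα => enorm_hirotaMultiplier_le hα.1 hα.2
  have hs1 : |s - 1| ≤ s := abs_le.2 ⟨by linarith, by linarith⟩
  have hsq := tendsto_hsNormSq_bilinearMultiplierFT_sub hs hs1 measurable_hirotaMultiplier hle
    (fun ξ η => (tendsto_hirotaMultiplier one_ne_zero ξ η).mono_left nhdsWithin_le_nhds) hF hG
  simpa only [hirotaSymbolFT_eq_bilinearMultiplierFT, Real.sqrt_zero] using hsq.sqrt
end
end
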